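/- arXiv:2509.16447 — 2 statements merged into one kernel-verified Lean document; each statement's English description precedes it below -/
import Mathlib

section
/- (Local conditional scores are exact for conditional projective compositions, at all noise levels.) Let n ∈ ℕ, let J be a finite set of conditioner indices, let {M_j : j ∈ J} be pairwise disjoint subsets of Fin n, and let B = Fin n \ (⋃_{j∈J} M_j). Let g : ℝ^B → ℝ be a strictly positive integrable function and, for each j ∈ J, let f_j, h_j : ℝ^{M_j} → ℝ be strictly positive integrable functions (f_j representing the conditional factor p(x_{M_j}|c_j) and h_j the unconditional factor p(x_{M_j}|∅)). For each subset 𝒥 ⊆ J define p_𝒥 : ℝⁿ → ℝ by p_𝒥(x) = g(x_B) · ∏_{j∈𝒥} f_j(x_{M_j}) · ∏_{j∈J\𝒥} h_j(x_{M_j}). Then for every t > 0, every 𝒥 ⊆ J, every x ∈ ℝⁿ, and every coordinate i ∈ Fin n: if i ∈ M_j with j ∈ 𝒥 then ∂_i log N_t[p_𝒥](x) = ∂_i log N_t[f_j](x_{M_j}); if i ∈ M_j with j ∉ 𝒥 then ∂_i log N_t[p_𝒥](x) = ∂_i log N_t[h_j](x_{M_j}); and if i ∈ B then ∂_i log N_t[p_𝒥](x)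 = ∂_i log N_t[g](x_B). In particular, the score of the noised composition at coordinate i depends only on the coordinates in the block containing i and on at most the single conditioner j with i ∈ M_j. -/
/-!
The Gaussian kernel is a product over any partition of the coordinates into blocks, so noising a
product of functions of separate blocks gives the product of the noised factors. The logarithm turns
this product into a sum in which a coordinate of block `k` enters only through the `k`-th summand.
Splitting the derivative of the sum requires the noised factors to be differentiable, and they are:
the kernel and its derivative are bounded, so one can differentiate under the integral sign.
-/

open Real MeasureTheory

/-- The noising operator in dimension `d = card ι`:
`N_t[p](x) = ∫ p(y) · (2πt²)^(−d/2) · exp(−‖x−y‖²/(2t²)) dy`,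
where `‖x−y‖² = ∑ i, (x i − y i)²` is the Euclidean norm squared. -/
noncomputable def noisingPi {ι : Type*} [Fintype ι] (p : (ι → ℝ) → ℝ) (t : ℝ)
    (x : ι → ℝ) : ℝ :=
  ∫ y : ι → ℝ, p y * ((2 * π * t ^ 2) ^ (-(Fintype.card ι : ℝ) / 2) *
    Real.exp (-(∑ i, (x i - y i) ^ 2) / (2 * t ^ 2)))

section Convolution

open scoped Convolution

variable {𝕜 E E' F G : Type*} [RCLike 𝕜]
  [NormedAddCommGroup E] [NormedSpace 𝕜 E] [NormedAddCommGroup E'] [NormedSpace 𝕜 E']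
  [NormedAddCommGroup F] [NormedSpace 𝕜 F]
  [NormedAddCommGroup G] [MeasurableSpace G] [BorelSpace G] [SecondCountableTopology G]
  {μ : Measure G} {f : G → E} {g : G → E'} {C C' : ℝ}

theorem convolutionExists_of_integrable_of_norm_le (L : E →L[𝕜] E' →L[𝕜] F)
    (hf : Integrable f μ) (hg : Continuous g) (hgC : ∀ z, ‖g z‖ ≤ C) :
    ConvolutionExists f g L μ := fun x =>
  ((hf.norm.const_mul ‖L‖).mul_const C).mono'
    (L.aestronglyMeasurable_comp₂ hf.aestronglyMeasurable
      (by fun_prop : Continuous fun y => g (x - y)).aestronglyMeasurable)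
    (.of_forall fun y => L.le_of_opNorm₂_le_of_le le_rfl le_rfl (hgC (x - y)))

set_option maxSynthPendingDepth 3 in
theorem hasFDerivAt_convolution_right_of_norm_le [NormedSpace ℝ F] [NormedSpace 𝕜 G]
    (L : E →L[𝕜] E' →L[𝕜] F) (hf : Integrable f μ) (hg : ContDiff 𝕜 1 g)
    (hgC : ∀ z, ‖g z‖ ≤ C) (hgC' : ∀ z, ‖fderiv 𝕜 g z‖ ≤ C') (x : G) :
    HasFDerivAt (f ⋆[L, μ] g) ((f ⋆[L.precompR G, μ] fderiv 𝕜 g) x) x := by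
  have hexists := convolutionExists_of_integrable_of_norm_le L hf hg.continuous hgC
  have hexists' := convolutionExists_of_integrable_of_norm_le (L.precompR G) hf
    (hg.continuous_fderiv one_ne_zero) hgC'
  have hderiv (x y : G) : HasFDerivAt (fun x => g (x - y)) (fderiv 𝕜 g (x - y)) x :=
    (hasFDerivAt_comp_sub y).2 (hg.differentiable one_ne_zero (x - y)).hasFDerivAt
  refine hasFDerivAt_integral_of_dominated_of_fderiv_le
    (bound := fun y => ‖L.precompR G‖ * ‖f y‖ * C') Filter.univ_mem
    (.of_forall fun x => (hexists x).aestronglyMeasurable) (hexists x)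
    (hexists' x).aestronglyMeasurable (.of_forall fun y x _ => ?_)
    ((hf.norm.const_mul _).mul_const _)
    (.of_forall fun y x _ => (L (f y)).hasFDerivAt.comp x (hderiv x y))
  exact (L.precompR G).le_of_opNorm₂_le_of_le le_rfl le_rfl (hgC' (x - y))

end Convolution

section GaussianKernel

variable {ι : Type*} [Fintype ι] {t : ℝ}

/-- The density of the centered isotropic Gaussian of standard deviation `t`, in the normalization
used by `noisingPi`. -/
noncomputable def gaussianKernel (t : ℝ) (z : ι → ℝ) : ℝ :=
  (2 * π * t ^ 2) ^ (-(Fintype.card ι : ℝ) / 2) * Real.exp (-(∑ i, z i ^ 2) / (2 * t ^ 2))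

theorem gaussianKernel_pos (ht : t ≠ 0) (z : ι → ℝ) : 0 < gaussianKernel t z := by
  unfold gaussianKernel
  positivity

theorem gaussianKernel_nonneg (z : ι → ℝ) : 0 ≤ gaussianKernel t z := by
  unfold gaussianKernel
  positivity

theorem gaussianKernel_eq_apply_zero_mul_exp (z : ι → ℝ) :
    gaussianKernel t z =
      gaussianKernel t (0 : ι → ℝ) * Real.exp (-(∑ i, z i ^ 2) / (2 * t ^ 2)) := by
  simp [gaussianKernel]

theorem norm_gaussianKernel_le_apply_zero (z : ι → ℝ) :
    ‖gaussianKernel t z‖ ≤ gaussianKernel t (0 : ι → ℝ) := by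
  rw [Real.norm_of_nonneg (gaussianKernel_nonneg z), gaussianKernel_eq_apply_zero_mul_exp z]
  refine mul_le_of_le_one_right (gaussianKernel_nonneg 0) (Real.exp_le_one_iff.2 ?_)
  rw [neg_div, neg_nonpos]
  positivity

theorem abs_mul_gaussianKernel_le (ht : t ≠ 0) (z : ι → ℝ) (i : ι) :
    |z i| * gaussianKernel t z ≤ |t| * gaussianKernel t (0 : ι → ℝ) := by
  have hexp : |z i / t| ≤ Real.exp ((∑ j, z j ^ 2) / (2 * t ^ 2)) := calc
    |z i / t| ≤ (z i / t) ^ 2 / 2 + 1 := by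
      nlinarith [sq_nonneg (|z i / t| - 1), sq_abs (z i / t)]
    _ ≤ Real.exp ((z i / t) ^ 2 / 2) := Real.add_one_le_exp _
    _ = Real.exp (z i ^ 2 / (2 * t ^ 2)) := by rw [div_pow, div_div, mul_comm]
    _ ≤ Real.exp ((∑ j, z j ^ 2) / (2 * t ^ 2)) := by
      gcongr
      exact Finset.single_le_sum (f := fun j => z j ^ 2) (fun j _ => sq_nonneg _)
        (Finset.mem_univ i)
  rw [abs_div, div_le_iff₀' (abs_pos.2 ht)] at hexp
  rw [gaussianKernel_eq_apply_zero_mul_exp z, neg_div, Real.exp_neg, mul_left_comm, mul_comm |t|]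
  gcongr
  · exact gaussianKernel_nonneg 0
  · rwa [← div_eq_mul_inv, div_le_iff₀ (Real.exp_pos _)]

theorem contDiff_gaussianKernel {m : WithTop ℕ∞} :
    ContDiff ℝ m (gaussianKernel t : (ι → ℝ) → ℝ) := by
  unfold gaussianKernel
  fun_prop

theorem hasFDerivAt_gaussianKernel (z : ι → ℝ) :
    HasFDerivAt (gaussianKernel t)
      ((-gaussianKernel t z / t ^ 2) • ∑ i, z i •
        (ContinuousLinearMap.proj i : (ι → ℝ) →L[ℝ] ℝ)) z := by
  have hsq (i : ι) : HasFDerivAt (fun z : ι → ℝ => z i ^ 2)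
      ((2 * z i) • (ContinuousLinearMap.proj i : (ι → ℝ) →L[ℝ] ℝ)) z := by
    simpa using (hasFDerivAt_apply (𝕜 := ℝ) i z).pow 2
  have hexponent := (HasFDerivAt.fun_sum (u := Finset.univ) fun i _ => hsq i).fun_neg.mul_const
    (2 * t ^ 2)⁻¹
  refine (hexponent.exp.const_mul _).congr_fderiv ?_
  ext v
  simp only [gaussianKernel, _root_.smul_apply, _root_.neg_apply, _root_.sum_apply,
    ContinuousLinearMap.proj_apply, smul_eq_mul, mul_assoc, ← Finset.mul_sum, ← div_eq_mul_inv]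
  ring

theorem norm_fderiv_gaussianKernel_le (ht : t ≠ 0) (z : ι → ℝ) :
    ‖fderiv ℝ (gaussianKernel t) z‖ ≤
      ∑ _i : ι, |t| * gaussianKernel t (0 : ι → ℝ) / t ^ 2 := by
  rw [(hasFDerivAt_gaussianKernel z).fderiv, Finset.smul_sum]
  refine norm_sum_le_of_le _ fun i _ => ?_
  have hproj : ‖(ContinuousLinearMap.proj i : (ι → ℝ) →L[ℝ] ℝ)‖ ≤ 1 :=
    ContinuousLinearMap.opNorm_le_bound _ zero_le_one fun v => by
      simpa using norm_le_pi_norm v i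
  calc ‖(-gaussianKernel t z / t ^ 2) • z i • (ContinuousLinearMap.proj i : (ι → ℝ) →L[ℝ] ℝ)‖
      ≤ ‖(-gaussianKernel t z / t ^ 2) * z i‖ := by
        rw [smul_smul, norm_smul]
        exact mul_le_of_le_one_right (norm_nonneg _) hproj
    _ = |z i| * gaussianKernel t z / t ^ 2 := by
        rw [norm_mul, norm_div, norm_neg, Real.norm_of_nonneg (gaussianKernel_nonneg z),
          Real.norm_of_nonneg (sq_nonneg t), Real.norm_eq_abs]
        ring
    _ ≤ |t| * gaussianKernel t (0 : ι → ℝ) / t ^ 2 := by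
        gcongr ?_ / _
        exact abs_mul_gaussianKernel_le ht z i

end GaussianKernel

section Noising

open scoped Convolution

variable {ι : Type*} [Fintype ι] {t : ℝ} {p : (ι → ℝ) → ℝ}

theorem noisingPi_eq_convolution (p : (ι → ℝ) → ℝ) (t : ℝ) : noisingPi p t = p ⋆ gaussianKernel t :=
  rfl

theorem differentiable_noisingPi (hp : Integrable p) (ht : t ≠ 0) :
    Differentiable ℝ (noisingPi p t) := by
  rw [noisingPi_eq_convolution]
  exact fun x => (hasFDerivAt_convolution_right_of_norm_le _ hp contDiff_gaussianKernel
    norm_gaussianKernel_le_apply_zero (norm_fderiv_gaussianKernel_le ht) x).differentiableAt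

/-- An unnormalized probability density; the normalizing constant, which scores do not see, is
only required to be nonzero. -/
structure IsUnnormalizedDensity {α : Type*} [MeasureSpace α] (p : α → ℝ) : Prop where
  nonneg : 0 ≤ p
  integrable : Integrable p
  not_ae_eq_zero : ¬ p =ᵐ[volume] 0

theorem isUnnormalizedDensity_of_pos {α : Type*} [MeasureSpace α] [NeZero (volume : Measure α)]
    {p : α → ℝ} (hpos : ∀ z, 0 < p z) (hint : Integrable p) : IsUnnormalizedDensity p where
  nonneg z := (hpos z).le
  integrable := hint
  not_ae_eq_zero hzero := hzero.exists.elim fun z hz => (hpos z).ne' hz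

theorem noisingPi_pos (hp : IsUnnormalizedDensity p) (ht : t ≠ 0) (x : ι → ℝ) :
    0 < noisingPi p t x := by
  have hnonneg : 0 ≤ fun y => p y * gaussianKernel t (x - y) := fun y =>
    mul_nonneg (hp.nonneg y) (gaussianKernel_nonneg _)
  have hint : Integrable fun y => p y * gaussianKernel t (x - y) :=
    convolutionExists_of_integrable_of_norm_le (ContinuousLinearMap.lsmul ℝ ℝ) hp.integrable
      (contDiff_gaussianKernel (m := 0)).continuous norm_gaussianKernel_le_apply_zero x
  refine (integral_nonneg hnonneg).lt_of_ne' fun hzero => hp.not_ae_eq_zero ?_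
  filter_upwards [(integral_eq_zero_iff_of_nonneg hnonneg hint).1 hzero] with y hy
  exact (mul_eq_zero.1 hy).resolve_right (gaussianKernel_pos ht _).ne'

end Noising

section Blocks

open scoped Topology

variable {ι K : Type*} {κ : K → Type*} (e : (Σ k, κ k) ≃ ι)

/-- The restriction `x ↦ x_{M_k}` to block `k`, where `e` exhibits `ι` as the disjoint union of
blocks `M_k` indexed by `κ k`. -/
def restrictBlock (k : K) : (ι → ℝ) →L[ℝ] (κ k → ℝ) :=
  ContinuousLinearMap.pi fun a => ContinuousLinearMap.proj (e ⟨k, a⟩)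

/-- The point of `ℝ^ι` with prescribed restrictions to the blocks, as a measurable equivalence. -/
def glueBlocks : (∀ k, κ k → ℝ) ≃ᵐ (ι → ℝ) :=
  (MeasurableEquiv.piCurry fun _ _ => ℝ).symm.trans (MeasurableEquiv.piCongrLeft (fun _ => ℝ) e)

theorem restrictBlock_glueBlocks (y : ∀ k, κ k → ℝ) (k : K) :
    restrictBlock e k (glueBlocks e y) = y k := by
  funext a
  exact Equiv.piCongrLeft_apply_apply (fun _ => ℝ) e _ (⟨k, a⟩ : Σ k, κ k)

theorem restrictBlock_single_self [DecidableEq ι] [∀ k, DecidableEq (κ k)] (k : K) (a : κ k) :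
    restrictBlock e k (Pi.single (e ⟨k, a⟩) 1) = Pi.single a 1 := by
  funext b
  simp [restrictBlock, Pi.single_apply]

theorem restrictBlock_single_of_ne [DecidableEq ι] {k l : K} (hlk : l ≠ k) (a : κ k) :
    restrictBlock e l (Pi.single (e ⟨k, a⟩) 1) = 0 := by
  funext b
  exact Pi.single_eq_of_ne (fun h => hlk (congrArg Sigma.fst (e.injective h))) 1

theorem fderiv_log_prod_restrictBlock_single [Finite ι] [Fintype K] [∀ k, Finite (κ k)]
    [DecidableEq ι] [∀ k, DecidableEq (κ k)] {G : ∀ k, (κ k → ℝ) → ℝ} {x : ι → ℝ}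
    (hG : ∀ k, DifferentiableAt ℝ (G k) (restrictBlock e k x))
    (hne : ∀ k, G k (restrictBlock e k x) ≠ 0) (k : K) (a : κ k) :
    fderiv ℝ (fun x' => Real.log (∏ l, G l (restrictBlock e l x'))) x (Pi.single (e ⟨k, a⟩) 1) =
      fderiv ℝ (fun z => Real.log (G k z)) (restrictBlock e k x) (Pi.single a 1) := by
  cases nonempty_fintype ι
  have (k : K) := Fintype.ofFinite (κ k)
  have hne_near (l : K) : ∀ᶠ x' in 𝓝 x, G l (restrictBlock e l x') ≠ 0 :=
    ((hG l).continuousAt.comp (restrictBlock e l).continuous.continuousAt).eventually_ne (hne l)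
  have hlog : (fun x' => Real.log (∏ l, G l (restrictBlock e l x'))) =ᶠ[𝓝 x]
      fun x' => ∑ l, Real.log (G l (restrictBlock e l x')) := by
    filter_upwards [Filter.eventually_all.2 hne_near] with x' hx'
    exact Real.log_prod fun l _ => hx' l
  have hsummand (l : K) : HasFDerivAt (fun x' => Real.log (G l (restrictBlock e l x')))
      ((fderiv ℝ (fun z => Real.log (G l z)) (restrictBlock e l x)).comp (restrictBlock e l)) x :=
    ((hG l).log (hne l)).hasFDerivAt.comp x (restrictBlock e l).hasFDerivAt
  rw [hlog.fderiv_eq, (HasFDerivAt.fun_sum (u := Finset.univ) fun l _ => hsummand l).fderiv,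
    _root_.sum_apply, Finset.sum_eq_single k]
  · rw [ContinuousLinearMap.comp_apply, restrictBlock_single_self]
  · intro l _ hlk
    rw [ContinuousLinearMap.comp_apply, restrictBlock_single_of_ne e hlk, map_zero]
  · simp

theorem measurePreserving_piCurry_symm [Fintype K] [∀ k, Fintype (κ k)] {X : ∀ k, κ k → Type*}
    [∀ k a, MeasurableSpace (X k a)] (μ : ∀ k a, Measure (X k a)) [∀ k a, SigmaFinite (μ k a)] :
    MeasurePreserving (MeasurableEquiv.piCurry X).symm
      (Measure.pi fun k => Measure.pi (μ k)) (Measure.pi fun s : Σ k, κ k => μ s.1 s.2) where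
  measurable := (MeasurableEquiv.piCurry X).symm.measurable
  map_eq := by
    refine (Measure.pi_eq fun s _ => ?_).symm
    have hpreimage : (MeasurableEquiv.piCurry X).symm ⁻¹' Set.univ.pi s =
        Set.univ.pi fun k => Set.univ.pi fun a => s ⟨k, a⟩ := by
      ext y
      simp [Set.mem_pi, Sigma.forall, Sigma.uncurry]
    rw [MeasurableEquiv.map_apply, hpreimage, Measure.pi_pi, Fintype.prod_sigma]
    simp_rw [Measure.pi_pi]

variable [Fintype ι] [Fintype K] [∀ k, Fintype (κ k)]

theorem measurePreserving_glueBlocks : MeasurePreserving (glueBlocks e) :=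
  (measurePreserving_piCurry_symm fun _ _ => volume).trans
    (volume_measurePreserving_piCongrLeft (fun _ => ℝ) e)

theorem gaussianKernel_eq_prod_restrictBlock {t : ℝ} (ht : t ≠ 0) (z : ι → ℝ) :
    gaussianKernel t z = ∏ k, gaussianKernel t (restrictBlock e k z) := by
  have hbase : 0 < 2 * π * t ^ 2 := by positivity
  simp only [gaussianKernel, Finset.prod_mul_distrib]
  congr 1
  · rw [← Real.rpow_sum_of_pos hbase, ← Fintype.card_congr e, Fintype.card_sigma, Nat.cast_sum,
      ← Finset.sum_div, Finset.sum_neg_distrib]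
  · rw [← Real.exp_sum, ← e.sum_comp, Fintype.sum_sigma, ← Finset.sum_div,
      Finset.sum_neg_distrib]
    rfl

theorem noisingPi_prod_restrictBlock {t : ℝ} (ht : t ≠ 0) (F : ∀ k, (κ k → ℝ) → ℝ) (x : ι → ℝ) :
    noisingPi (fun y => ∏ k, F k (restrictBlock e k y)) t x =
      ∏ k, noisingPi (F k) t (restrictBlock e k x) := calc
  _ = ∫ y, (∏ k, F k (restrictBlock e k y)) * gaussianKernel t (x - y) := rfl
  _ = ∫ y, ∏ k, F k (restrictBlock e k y) *
        gaussianKernel t (restrictBlock e k x - restrictBlock e k y) := by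
    simp_rw [gaussianKernel_eq_prod_restrictBlock e ht, map_sub, Finset.prod_mul_distrib]
  _ = ∫ y : ∀ k, κ k → ℝ, ∏ k, F k (y k) * gaussianKernel t (restrictBlock e k x - y k) := by
    rw [← (measurePreserving_glueBlocks e).integral_comp']
    simp_rw [restrictBlock_glueBlocks]
  _ = ∏ k, noisingPi (F k) t (restrictBlock e k x) :=
    integral_fintype_prod_volume_eq_prod
      fun k y => F k y * gaussianKernel t (restrictBlock e k x - y)

theorem score_noisingPi_prod_restrictBlock [DecidableEq ι] [∀ k, DecidableEq (κ k)] {t : ℝ}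
    (ht : t ≠ 0) {F : ∀ k, (κ k → ℝ) → ℝ} (hF : ∀ k, IsUnnormalizedDensity (F k)) (x : ι → ℝ)
    (k : K) (a : κ k) :
    fderiv ℝ (fun x' => Real.log (noisingPi (fun y => ∏ l, F l (restrictBlock e l y)) t x')) x
        (Pi.single (e ⟨k, a⟩) 1) =
      fderiv ℝ (fun z => Real.log (noisingPi (F k) t z)) (restrictBlock e k x)
        (Pi.single a 1) := by
  simp_rw [noisingPi_prod_restrictBlock e ht]
  exact fderiv_log_prod_restrictBlock_single e
    (fun l => differentiable_noisingPi (hF l).integrable ht _)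
    (fun l => (noisingPi_pos (hF l) ht _).ne') k a

end Blocks

section Composition

variable {ι J : Type*} [Fintype ι] [DecidableEq ι] [Fintype J]

/-- The partition of the coordinates into the blocks `M j` and the background, which is the block of
index `none`. -/
def cpcBlock (M : J → Finset ι) : Option J → Finset ι
  | none => (Finset.univ.biUnion M)ᶜ
  | some j => M j

theorem existsUnique_mem_cpcBlock {M : J → Finset ι}
    (hdisj : Pairwise fun j k => Disjoint (M j) (M k)) (i : ι) : ∃! o, i ∈ cpcBlock M o := by
  by_cases hi : ∃ j, i ∈ M j
  · obtain ⟨j, hj⟩ := hi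
    refine ⟨some j, hj, ?_⟩
    rintro (_ | k) hk
    · have hnone : ∀ l, i ∉ M l := by simpa [cpcBlock] using hk
      exact absurd hj (hnone j)
    · by_contra hkj
      exact Finset.disjoint_left.1 (hdisj fun h => hkj (congrArg some h)) hk hj
  · refine ⟨none, by simpa [cpcBlock] using hi, ?_⟩
    rintro (_ | k) hk
    · rfl
    · exact absurd ⟨k, hk⟩ hi

variable [DecidableEq J] {M : J → Finset ι} (𝒥 : Finset J)
  (g : (((Finset.univ.biUnion M)ᶜ : Finset ι) → ℝ) → ℝ)
  (f h : ∀ j, (M j → ℝ) → ℝ)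

/-- The factor of `p_𝒥` living on each block: the background `g`, the conditional factor `f j` for
`j ∈ 𝒥`, and the unconditional factor `h j` for `j ∉ 𝒥`. -/
def cpcFactor : ∀ o, (cpcBlock M o → ℝ) → ℝ
  | none => g
  | some j => if j ∈ 𝒥 then f j else h j

variable {𝒥 g f h}

theorem cpcFactor_some_of_mem {j : J} (hj : j ∈ 𝒥) : cpcFactor 𝒥 g f h (some j) = f j :=
  if_pos hj

theorem cpcFactor_some_of_notMem {j : J} (hj : j ∉ 𝒥) : cpcFactor 𝒥 g f h (some j) = h j :=
  if_neg hj

theorem isUnnormalizedDensity_cpcFactor (hg : IsUnnormalizedDensity g)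
    (hf : ∀ j, IsUnnormalizedDensity (f j)) (hh : ∀ j, IsUnnormalizedDensity (h j)) :
    ∀ o, IsUnnormalizedDensity (cpcFactor 𝒥 g f h o)
  | none => hg
  | some j => by
    by_cases hj : j ∈ 𝒥
    · rw [cpcFactor_some_of_mem hj]
      exact hf j
    · rw [cpcFactor_some_of_notMem hj]
      exact hh j

theorem prod_cpcFactor (y : ∀ o, cpcBlock M o → ℝ) :
    ∏ o, cpcFactor 𝒥 g f h o (y o) =
      g (y none) * (∏ j ∈ 𝒥, f j (y (some j))) * ∏ j ∈ 𝒥ᶜ, h j (y (some j)) := by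
  rw [Fintype.prod_option, ← Finset.prod_mul_prod_compl 𝒥, mul_assoc]
  refine congrArg _ (congrArg₂ _ ?_ ?_)
  · exact Finset.prod_congr rfl fun j hj => congrFun (cpcFactor_some_of_mem hj) _
  · exact Finset.prod_congr rfl fun j hj =>
      congrFun (cpcFactor_some_of_notMem (Finset.mem_compl.1 hj)) _

theorem local_conditional_scores_exact_for_cpc_general
    (hdisj : Pairwise fun j k => Disjoint (M j) (M k))
    {B : Finset ι} (hB : B = (Finset.univ.biUnion M)ᶜ)
    {g : (B → ℝ) → ℝ} (hg : IsUnnormalizedDensity g)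
    (hf : ∀ j, IsUnnormalizedDensity (f j)) (hh : ∀ j, IsUnnormalizedDensity (h j))
    {p : (ι → ℝ) → ℝ}
    (hp : ∀ x, p x = g (fun i => x i) * (∏ j ∈ 𝒥, f j (fun i => x i)) *
      ∏ j ∈ 𝒥ᶜ, h j (fun i => x i))
    {t : ℝ} (ht : t ≠ 0) (x : ι → ℝ) (i : ι) :
    (∀ (j : J) (hij : i ∈ M j), j ∈ 𝒥 →
      fderiv ℝ (fun x' => Real.log (noisingPi p t x')) x (Pi.single i 1) =
        fderiv ℝ (fun z => Real.log (noisingPi (f j) t z)) (fun i' => x i')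
          (Pi.single ⟨i, hij⟩ 1)) ∧
    (∀ (j : J) (hij : i ∈ M j), j ∉ 𝒥 →
      fderiv ℝ (fun x' => Real.log (noisingPi p t x')) x (Pi.single i 1) =
        fderiv ℝ (fun z => Real.log (noisingPi (h j) t z)) (fun i' => x i')
          (Pi.single ⟨i, hij⟩ 1)) ∧
    ∀ hiB : i ∈ B,
      fderiv ℝ (fun x' => Real.log (noisingPi p t x')) x (Pi.single i 1) =
        fderiv ℝ (fun z => Real.log (noisingPi g t z)) (fun i' => x i')
          (Pi.single ⟨i, hiB⟩ 1) := by
  subst hB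
  let e : (Σ o, cpcBlock M o) ≃ ι :=
    Set.sigmaEquiv (fun o => (cpcBlock M o : Set ι)) (existsUnique_mem_cpcBlock hdisj)
  obtain rfl : p = fun y => ∏ o, cpcFactor 𝒥 g f h o (restrictBlock e o y) :=
    funext fun y => (hp y).trans (prod_cpcFactor fun o => restrictBlock e o y).symm
  have score_eq := score_noisingPi_prod_restrictBlock e ht
    (isUnnormalizedDensity_cpcFactor (𝒥 := 𝒥) hg hf hh) x
  refine ⟨fun j hij hj => ?_, fun j hij hj => ?_, fun hiB => score_eq none ⟨i, hiB⟩⟩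
  · rw [← cpcFactor_some_of_mem (g := g) (f := f) (h := h) hj]
    exact score_eq (some j) ⟨i, hij⟩
  · rw [← cpcFactor_some_of_notMem (g := g) (f := f) (h := h) hj]
    exact score_eq (some j) ⟨i, hij⟩

end Composition

theorem local_conditional_scores_exact_for_cpc
    (n : ℕ) {J : Type*} [Fintype J] [DecidableEq J]
    -- pairwise disjoint blocks M_j, with background block B
    (M : J → Finset (Fin n))
    (hdisj : ∀ j k : J, j ≠ k → Disjoint (M j) (M k))
    (B : Finset (Fin n)) (hB : B = (Finset.univ.biUnion fun j : J => M j)ᶜ)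
    -- strictly positive integrable factors
    (g : ({i // i ∈ B} → ℝ) → ℝ)
    (f h : ∀ j : J, ({i // i ∈ M j} → ℝ) → ℝ)
    (hg_pos : ∀ z, 0 < g z) (hg_int : Integrable g)
    (hf_pos : ∀ j z, 0 < f j z) (hf_int : ∀ j, Integrable (f j))
    (hh_pos : ∀ j z, 0 < h j z) (hh_int : ∀ j, Integrable (h j))
    -- the conditional projective composition family p_𝒥
    (p : Finset J → (Fin n → ℝ) → ℝ)
    (hp : ∀ (𝒥 : Finset J) (x : Fin n → ℝ),
      p 𝒥 x = g (fun i : {a // a ∈ B} => x i.1) *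
        (∏ j ∈ 𝒥, f j (fun i : {a // a ∈ M j} => x i.1)) *
        ∏ j ∈ 𝒥ᶜ, h j (fun i : {a // a ∈ M j} => x i.1)) :
    ∀ t > (0 : ℝ), ∀ (𝒥 : Finset J) (x : Fin n → ℝ) (i : Fin n),
      -- case i ∈ M_j with j ∈ 𝒥: the score follows the conditional factor f_j
      (∀ (j : J) (hij : i ∈ M j), j ∈ 𝒥 →
        fderiv ℝ (fun x' => Real.log (noisingPi (p 𝒥) t x')) x (Pi.single i 1)
          = fderiv ℝ (fun z => Real.log (noisingPi (f j) t z))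
              (fun i' : {a // a ∈ M j} => x i'.1)
              (Pi.single (⟨i, hij⟩ : {a // a ∈ M j}) 1))
      -- case i ∈ M_j with j ∉ 𝒥: the score follows the unconditional factor h_j
      ∧ (∀ (j : J) (hij : i ∈ M j), j ∉ 𝒥 →
        fderiv ℝ (fun x' => Real.log (noisingPi (p 𝒥) t x')) x (Pi.single i 1)
          = fderiv ℝ (fun z => Real.log (noisingPi (h j) t z))
              (fun i' : {a // a ∈ M j} => x i'.1)
              (Pi.single (⟨i, hij⟩ : {a // a ∈ M j}) 1))
      -- case i ∈ B: the score follows the background factor g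
      ∧ (∀ hiB : i ∈ B,
        fderiv ℝ (fun x' => Real.log (noisingPi (p 𝒥) t x')) x (Pi.single i 1)
          = fderiv ℝ (fun z => Real.log (noisingPi g t z))
              (fun i' : {a // a ∈ B} => x i'.1)
              (Pi.single (⟨i, hiB⟩ : {a // a ∈ B}) 1)) := by
  intro t ht 𝒥
  exact local_conditional_scores_exact_for_cpc_general (fun j k => hdisj j k) hB
    (isUnnormalizedDensity_of_pos hg_pos hg_int)
    (fun j => isUnnormalizedDensity_of_pos (hf_pos j) (hf_int j))
    (fun j => isUnnormalizedDensity_of_pos (hh_pos j) (hh_int j)) (hp 𝒥) ht.ne'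
end

section
/- (Mean-field KL bound.) Let E = E₀ × E₁ × ⋯ × E_m where each E_k = ℝ^{n_k}, let p be a strictly positive probability density on E, and for each k let q_k be a strictly positive probability density on E_k. For x ∈ E write x_k for its k-th block and x_{−k} for the remaining blocks, and define the conditional density p(x_k | x_{−k}) = p(x) / ∫_{E_k} p(x'_k, x_{−k}) dx'_k (the denominator assumed positive and finite everywhere). Assume all KL divergences below are finite. Then D_KL(p ‖ ⊗_{k=0}^m q_k) ≤ Σ_{k=0}^m sup_{x_{−k}} D_KL( p(· | x_{−k}) ‖ q_k ), where ⊗_k q_k denotes the product density x ↦ ∏_k q_k(x_k). -/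
open Real MeasureTheory

/-- The conditional density `p(x_k | x_{−k})`:
`p(x with k-th block replaced by y) / ∫ p(x with k-th block replaced by y') dy'`. -/
noncomputable def condDensity {m : ℕ} {nd : Fin (m + 1) → ℕ}
    (p : (∀ k, Fin (nd k) → ℝ) → ℝ) (k : Fin (m + 1))
    (x : ∀ k, Fin (nd k) → ℝ) (y : Fin (nd k) → ℝ) : ℝ :=
  p (Function.update x k y) / ∫ y', p (Function.update x k y')

/-- `D_KL(p(· | x_{−k}) ‖ q_k)`, the KL divergence of the conditional density of the
`k`-th block given the remaining blocks `x_{−k}` from `q_k`. -/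
noncomputable def condKL {m : ℕ} {nd : Fin (m + 1) → ℕ}
    (p : (∀ k, Fin (nd k) → ℝ) → ℝ) (q : ∀ k, (Fin (nd k) → ℝ) → ℝ)
    (k : Fin (m + 1)) (x : ∀ k, Fin (nd k) → ℝ) : ℝ :=
  ∫ y, condDensity p k x y * Real.log (condDensity p k x y / q k y)

/-! Put `ν = ⊗ q_k` and `ρ = p / ∏ q_k`, so that the left-hand side is the entropy `∫ ρ log ρ dν`,
and let `A_s` be the marginal of `ρ` obtained by integrating out the blocks in `s`. Since
`log t ≤ t - 1`, pointwise and for `k ∉ s`,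
`ρ log (ρ / A_{s ∪ {k}}) ≤ ρ log (ρ / A_s) + ρ log (ρ / A_{{k}}) + (A_s A_{{k}} / A_{s ∪ {k}} - ρ)`,
and the last term has nonpositive integral, because integrating `A_s` over the block `k` cancels the
denominator. Starting from `A_∅ = ρ` and adding the blocks one at a time bounds the entropy by
`∑ k, ∫ ρ log (ρ / A_{{k}}) dν`. By Fubini each summand is an average, with weight `A_{{k}}`, of the
conditional divergences given the other blocks, hence at most their supremum. -/

section Integrand

variable {α : Type*}

/-- The integrand `u log (u / v)` of the KL divergence of the density `u` from the density `v`, with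
the convention that it vanishes where `u` does. -/
noncomputable def klIntegrand (u v : α → ℝ) (x : α) : ℝ :=
  u x * Real.log (u x / v x)

lemma klIntegrand_self (u : α → ℝ) : klIntegrand u u = 0 := by
  ext x
  by_cases hx : u x = 0 <;> simp [klIntegrand, hx]

lemma mul_klIntegrand_div_one {u v : α → ℝ} (hv : ∀ x, v x ≠ 0) :
    (fun x => v x * klIntegrand (u / v) 1 x) = klIntegrand u v := by
  ext x
  simp only [klIntegrand, Pi.div_apply, Pi.one_apply, div_one]
  rw [← mul_assoc, mul_div_cancel₀ _ (hv x)]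

lemma sub_le_klIntegrand {u v : α → ℝ} {x : α} (hu : 0 ≤ u x) (hv : 0 ≤ v x)
    (huv : v x = 0 → u x = 0) : u x - v x ≤ klIntegrand u v x := by
  obtain hu0 | hu_pos := hu.eq_or_lt
  · simp [klIntegrand, ← hu0, hv]
  have hv_pos : 0 < v x := hv.lt_of_ne fun h => hu_pos.ne' (huv h.symm)
  calc u x - v x = u x * (1 - (u x / v x)⁻¹) := by field_simp
    _ ≤ klIntegrand u v x :=
      mul_le_mul_of_nonneg_left (Real.one_sub_inv_le_log_of_pos (div_pos hu_pos hv_pos)) hu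

lemma abs_klIntegrand_one_le {u : α → ℝ} {x : α} (hu : 0 ≤ u x) :
    |klIntegrand u 1 x| ≤ klIntegrand u 1 x + 2 := by
  have h := sub_le_klIntegrand (v := 1) hu zero_le_one (by simp)
  rw [Pi.one_apply] at h
  rw [abs_le]
  constructor <;> linarith

lemma mul_log_div_le_add {a b c d : ℝ} (ha : 0 < a) (hb : 0 < b) (hc : 0 < c) (hd : 0 < d) :
    a * Real.log (a / c) ≤
      a * Real.log (a / b) + a * Real.log (a / d) + (b * (d / c) - a) := by
  have hlog := Real.log_le_sub_one_of_pos (x := b * (d / c) / a) (by positivity)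
  have hmul := mul_le_mul_of_nonneg_left hlog ha.le
  rw [mul_sub, mul_div_cancel₀ _ ha.ne', mul_one, Real.log_div (by positivity) ha.ne',
    Real.log_mul hb.ne' (by positivity), Real.log_div hd.ne' hc.ne'] at hmul
  rw [Real.log_div ha.ne' hc.ne', Real.log_div ha.ne' hb.ne', Real.log_div ha.ne' hd.ne']
  linarith

end Integrand

section Marginal

variable {ι : Type*} [DecidableEq ι] {X : ι → Type*} [∀ i, MeasurableSpace (X i)]
  {ν : ∀ i, Measure (X i)} {s t : Finset ι} {f g h : (∀ i, X i) → ENNReal}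

lemma dependsOn_lmarginal (hst : s ⊆ t) : DependsOn (∫⋯∫⁻_t, f ∂ν) (s : Set ι)ᶜ :=
  fun _ _ hxy => lmarginal_congr ν f fun i hi => hxy i fun his => hi (hst his)

lemma lmarginal_mul_of_dependsOn (hg : Measurable g) (hh : DependsOn h (s : Set ι)ᶜ) :
    ∫⋯∫⁻_s, g * h ∂ν = (∫⋯∫⁻_s, g ∂ν) * h := by
  ext x
  have hconst (y : ∀ i : s, X i) : h (Function.updateFinset x s y) = h x :=
    hh fun i hi => dif_neg hi
  simp only [lmarginal, Pi.mul_apply, hconst]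
  exact lintegral_mul_const _ (hg.comp measurable_updateFinset)

variable [∀ i, IsProbabilityMeasure (ν i)]

lemma lmarginal_of_dependsOn (hh : DependsOn h (s : Set ι)ᶜ) : ∫⋯∫⁻_s, h ∂ν = h := by
  have hone : ∫⋯∫⁻_s, (1 : (∀ i, X i) → ENNReal) ∂ν = 1 := by
    ext x
    simp [lmarginal]
  simpa [hone] using lmarginal_mul_of_dependsOn (ν := ν) measurable_one hh

variable [Fintype ι]

lemma lintegral_lmarginal_mul (hg : Measurable g) (hh : Measurable h)
    (hdep : DependsOn h (s : Set ι)ᶜ) :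
    ∫⁻ x, (∫⋯∫⁻_s, g ∂ν) x * h x ∂Measure.pi ν = ∫⁻ x, g x * h x ∂Measure.pi ν := by
  refine lintegral_eq_of_lmarginal_eq s ((hg.lmarginal ν).mul hh) (hg.mul hh) ?_
  change ∫⋯∫⁻_s, (∫⋯∫⁻_s, g ∂ν) * h ∂ν = ∫⋯∫⁻_s, g * h ∂ν
  rw [lmarginal_mul_of_dependsOn (hg.lmarginal ν) hdep, lmarginal_mul_of_dependsOn hg hdep,
    lmarginal_of_dependsOn (dependsOn_lmarginal subset_rfl)]

lemma lintegral_lmarginal (hf : Measurable f) :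
    ∫⁻ x, (∫⋯∫⁻_s, f ∂ν) x ∂Measure.pi ν = ∫⁻ x, f x ∂Measure.pi ν := by
  simpa using lintegral_lmarginal_mul (ν := ν) (s := s) hf measurable_one fun _ _ _ => rfl

lemma ae_lmarginal_ne_top (hf : Measurable f) (hfin : ∫⁻ x, f x ∂Measure.pi ν ≠ ⊤)
    (s : Finset ι) : ∀ᵐ x ∂Measure.pi ν, (∫⋯∫⁻_s, f ∂ν) x ≠ ⊤ :=
  (ae_lt_top (hf.lmarginal ν) (by rwa [lintegral_lmarginal hf])).mono fun _ => LT.lt.ne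

lemma ae_eq_zero_of_lmarginal_eq_zero (hf : Measurable f) (s : Finset ι) :
    ∀ᵐ x ∂Measure.pi ν, (∫⋯∫⁻_s, f ∂ν) x = 0 → f x = 0 := by
  set vanishing : (∀ i, X i) → ENNReal := fun x => if (∫⋯∫⁻_s, f ∂ν) x = 0 then 1 else 0
  have hmeas : Measurable vanishing :=
    Measurable.ite (hf.lmarginal ν (measurableSet_singleton 0)) measurable_const measurable_const
  have hdep : DependsOn vanishing (s : Set ι)ᶜ := fun x y hxy => by
    simp only [vanishing, dependsOn_lmarginal (ν := ν) (f := f) subset_rfl hxy]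
  have hzero : ∫⁻ x, f x * vanishing x ∂Measure.pi ν = 0 := by
    rw [← lintegral_lmarginal_mul hf hmeas hdep]
    refine lintegral_eq_zero_of_ae_eq_zero (.of_forall fun x => ?_)
    by_cases hx : (∫⋯∫⁻_s, f ∂ν) x = 0 <;> simp [vanishing, hx]
  filter_upwards [(lintegral_eq_zero_iff (hf.mul hmeas)).mp hzero] with x hx h0
  simpa [vanishing, h0] using hx

-- In the coordinate `k` the first factor integrates to the denominator of the second.
lemma lintegral_lmarginal_mul_div_le (hf : Measurable f) {k : ι} (hk : k ∉ s) :
    ∫⁻ x, (∫⋯∫⁻_s, f ∂ν) x * ((∫⋯∫⁻_{k}, f ∂ν) x / (∫⋯∫⁻_insert k s, f ∂ν) x) ∂Measure.pi ν ≤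
      ∫⁻ x, f x ∂Measure.pi ν := by
  set ratio : (∀ i, X i) → ENNReal := fun x => (∫⋯∫⁻_{k}, f ∂ν) x / (∫⋯∫⁻_insert k s, f ∂ν) x
  have hmeas : Measurable ratio := (hf.lmarginal ν).div (hf.lmarginal ν)
  have hdep : DependsOn ratio (({k} : Finset ι) : Set ι)ᶜ := fun x y hxy => by
    simp only [ratio, dependsOn_lmarginal (ν := ν) (f := f) subset_rfl hxy,
      dependsOn_lmarginal (ν := ν) (f := f) (Finset.singleton_subset_iff.mpr
        (Finset.mem_insert_self k s)) hxy]
  have hinsert : ∫⋯∫⁻_{k}, (∫⋯∫⁻_s, f ∂ν) ∂ν = ∫⋯∫⁻_insert k s, f ∂ν := by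
    rw [Finset.insert_eq, lmarginal_union ν f hf (Finset.disjoint_singleton_left.mpr hk)]
  calc ∫⁻ x, (∫⋯∫⁻_s, f ∂ν) x * ratio x ∂Measure.pi ν
      = ∫⁻ x, (∫⋯∫⁻_insert k s, f ∂ν) x * ratio x ∂Measure.pi ν := by
        rw [← lintegral_lmarginal_mul (hf.lmarginal ν) hmeas hdep, hinsert]
    _ ≤ ∫⁻ x, (∫⋯∫⁻_{k}, f ∂ν) x ∂Measure.pi ν := lintegral_mono fun x => ENNReal.mul_div_le
    _ = ∫⁻ x, f x ∂Measure.pi ν := lintegral_lmarginal hf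

variable (ν) in
lemma measurePreserving_update (k : ι) :
    MeasurePreserving (fun z : (∀ i, X i) × X k => Function.update z.1 k z.2)
      ((Measure.pi ν).prod (ν k)) (Measure.pi ν) := by
  refine ⟨measurable_update', Measure.ext_of_lintegral _ fun f hf => ?_⟩
  rw [lintegral_map hf measurable_update',
    lintegral_prod (fun z : (∀ i, X i) × X k => f (Function.update z.1 k z.2))
      (hf.comp measurable_update').aemeasurable,
    ← lintegral_lmarginal (s := {k}) hf, lmarginal_singleton]

lemma ae_ae_update {P : (∀ i, X i) → Prop} (hP : ∀ᵐ x ∂Measure.pi ν, P x) (k : ι) :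
    ∀ᵐ x ∂Measure.pi ν, ∀ᵐ y ∂ν k, P (Function.update x k y) :=
  Measure.ae_ae_of_ae_prod ((measurePreserving_update ν k).quasiMeasurePreserving.ae hP)

/-- The integrand of the KL divergence of the density `f` from its marginal in the variables outside
`s`, both taken relative to the product of the `ν i`. -/
noncomputable def marginalKLIntegrand (ν : ∀ i, Measure (X i)) (f : (∀ i, X i) → ENNReal)
    (s : Finset ι) : (∀ i, X i) → ℝ :=
  klIntegrand (fun x => (f x).toReal) fun x => ((∫⋯∫⁻_s, f ∂ν) x).toReal

lemma marginalKLIntegrand_insert_ae_le (hf : Measurable f)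
    (hfin : ∫⁻ x, f x ∂Measure.pi ν ≠ ⊤) (s : Finset ι) (k : ι) :
    ∀ᵐ x ∂Measure.pi ν, marginalKLIntegrand ν f (insert k s) x ≤
      marginalKLIntegrand ν f s x + marginalKLIntegrand ν f {k} x +
        (((∫⋯∫⁻_s, f ∂ν) x * ((∫⋯∫⁻_{k}, f ∂ν) x / (∫⋯∫⁻_insert k s, f ∂ν) x)).toReal -
          (f x).toReal) := by
  have hpos (t : Finset ι) :
      ∀ᵐ x ∂Measure.pi ν, 0 < (f x).toReal → 0 < ((∫⋯∫⁻_t, f ∂ν) x).toReal := by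
    filter_upwards [ae_eq_zero_of_lmarginal_eq_zero hf t, ae_lmarginal_ne_top hf hfin t]
      with x hzero htop hx
    exact ENNReal.toReal_pos (fun h0 => by simp [hzero h0] at hx) htop
  filter_upwards [hpos s, hpos {k}, hpos (insert k s)] with x hs hk hks
  obtain hx | hx := (ENNReal.toReal_nonneg (a := f x)).eq_or_lt
  · simp only [marginalKLIntegrand, klIntegrand, ← hx, zero_mul, zero_add, sub_zero]
    exact ENNReal.toReal_nonneg
  · rw [ENNReal.toReal_mul, ENNReal.toReal_div]
    exact mul_log_div_le_add hx (hs hx) (hks hx) (hk hx)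

lemma integrable_toReal_lmarginal (hf : Measurable f) (hfin : ∫⁻ x, f x ∂Measure.pi ν ≠ ⊤)
    (s : Finset ι) : Integrable (fun x => ((∫⋯∫⁻_s, f ∂ν) x).toReal) (Measure.pi ν) :=
  integrable_toReal_of_lintegral_ne_top (hf.lmarginal ν).aemeasurable
    (by rwa [lintegral_lmarginal hf])

lemma integrable_marginalKLIntegrand_of_ae_le (hf : Measurable f)
    (hfin : ∫⁻ x, f x ∂Measure.pi ν ≠ ⊤) {s : Finset ι} {u : (∀ i, X i) → ℝ}
    (hu : Integrable u (Measure.pi ν)) (hle : marginalKLIntegrand ν f s ≤ᵐ[Measure.pi ν] u) :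
    Integrable (marginalKLIntegrand ν f s) (Measure.pi ν) := by
  have hmeas : Measurable (marginalKLIntegrand ν f s) :=
    hf.ennreal_toReal.mul (hf.ennreal_toReal.div (hf.lmarginal ν).ennreal_toReal).log
  have hf_int := integrable_toReal_of_lintegral_ne_top hf.aemeasurable hfin
  refine integrable_of_le_of_le hmeas.aestronglyMeasurable ?_ hle
    (hf_int.sub (integrable_toReal_lmarginal hf hfin s)) hu
  filter_upwards [ae_eq_zero_of_lmarginal_eq_zero hf s, ae_lmarginal_ne_top hf hfin s]
    with x hzero htop
  refine sub_le_klIntegrand (u := fun x => (f x).toReal)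
    (v := fun x => ((∫⋯∫⁻_s, f ∂ν) x).toReal) ENNReal.toReal_nonneg ENNReal.toReal_nonneg
    fun h0 => ?_
  rw [hzero (((ENNReal.toReal_eq_zero_iff _).mp h0).resolve_right htop), ENNReal.toReal_zero]

lemma integral_marginalKLIntegrand_insert_le (hf : Measurable f)
    (hfin : ∫⁻ x, f x ∂Measure.pi ν ≠ ⊤) {s : Finset ι} {k : ι} (hk : k ∉ s)
    (hs_int : Integrable (marginalKLIntegrand ν f s) (Measure.pi ν))
    (hk_int : Integrable (marginalKLIntegrand ν f {k}) (Measure.pi ν)) :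
    Integrable (marginalKLIntegrand ν f (insert k s)) (Measure.pi ν) ∧
      ∫ x, marginalKLIntegrand ν f (insert k s) x ∂Measure.pi ν ≤
        ∫ x, marginalKLIntegrand ν f s x ∂Measure.pi ν +
          ∫ x, marginalKLIntegrand ν f {k} x ∂Measure.pi ν := by
  set G : (∀ i, X i) → ENNReal := fun x =>
    (∫⋯∫⁻_s, f ∂ν) x * ((∫⋯∫⁻_{k}, f ∂ν) x / (∫⋯∫⁻_insert k s, f ∂ν) x)
  have hG : Measurable G := (hf.lmarginal ν).mul ((hf.lmarginal ν).div (hf.lmarginal ν))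
  have hG_le : ∫⁻ x, G x ∂Measure.pi ν ≤ ∫⁻ x, f x ∂Measure.pi ν :=
    lintegral_lmarginal_mul_div_le hf hk
  have hG_fin : ∫⁻ x, G x ∂Measure.pi ν ≠ ⊤ := ne_top_of_le_ne_top hfin hG_le
  have hG_int := integrable_toReal_of_lintegral_ne_top hG.aemeasurable hG_fin
  have hf_int := integrable_toReal_of_lintegral_ne_top hf.aemeasurable hfin
  have hmass : ∫ x, (G x).toReal ∂Measure.pi ν ≤ ∫ x, (f x).toReal ∂Measure.pi ν := by
    rw [integral_toReal hG.aemeasurable (ae_lt_top hG hG_fin),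
      integral_toReal hf.aemeasurable (ae_lt_top hf hfin)]
    exact ENNReal.toReal_mono hfin hG_le
  have hle := marginalKLIntegrand_insert_ae_le hf hfin s k
  have hbound_int := (hs_int.add hk_int).add (hG_int.sub hf_int)
  have hint := integrable_marginalKLIntegrand_of_ae_le hf hfin hbound_int hle
  refine ⟨hint, (integral_mono_ae hint hbound_int hle).trans ?_⟩
  rw [integral_add' (hs_int.add hk_int) (hG_int.sub hf_int), integral_add' hs_int hk_int,
    integral_sub' hG_int hf_int]
  linarith

lemma integral_marginalKLIntegrand_le_sum (hf : Measurable f)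
    (hfin : ∫⁻ x, f x ∂Measure.pi ν ≠ ⊤) (s : Finset ι)
    (hint : ∀ k ∈ s, Integrable (marginalKLIntegrand ν f {k}) (Measure.pi ν)) :
    Integrable (marginalKLIntegrand ν f s) (Measure.pi ν) ∧
      ∫ x, marginalKLIntegrand ν f s x ∂Measure.pi ν ≤
        ∑ k ∈ s, ∫ x, marginalKLIntegrand ν f {k} x ∂Measure.pi ν := by
  induction s using Finset.induction_on with
  | empty =>
    have hzero : marginalKLIntegrand ν f ∅ = 0 := by
      rw [marginalKLIntegrand, lmarginal_empty, klIntegrand_self]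
    simp [hzero]
  | insert k s hk ih =>
    obtain ⟨hs_int, hs_le⟩ := ih fun j hj => hint j (Finset.mem_insert_of_mem hj)
    obtain ⟨hks_int, hks_le⟩ := integral_marginalKLIntegrand_insert_le hf hfin hk hs_int
      (hint k (Finset.mem_insert_self k s))
    refine ⟨hks_int, hks_le.trans ?_⟩
    rw [Finset.sum_insert hk, add_comm]
    gcongr

end Marginal

section BlockConditional

variable {ι : Type*} [DecidableEq ι] {X : ι → Type*} [∀ i, MeasurableSpace (X i)]

/-- The density of the variables other than the `k`-th one, as a function on the whole product that
ignores `x k`. It is `0` where the integral diverges. -/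
noncomputable def blockMarginal (μ : ∀ i, Measure (X i)) (p : (∀ i, X i) → ℝ) (k : ι)
    (x : ∀ i, X i) : ℝ :=
  ∫ y, p (Function.update x k y) ∂μ k

/-- The conditional density of the `k`-th variable given the others; it is `0` where the marginal
density of the others is. On Euclidean blocks it is `condDensity`. -/
noncomputable def blockCondDensity (μ : ∀ i, Measure (X i)) (p : (∀ i, X i) → ℝ) (k : ι)
    (x : ∀ i, X i) (y : X k) : ℝ :=
  p (Function.update x k y) / blockMarginal μ p k x

lemma blockMarginal_update (μ : ∀ i, Measure (X i)) (p : (∀ i, X i) → ℝ) (k : ι)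
    (x : ∀ i, X i) (y : X k) :
    blockMarginal μ p k (Function.update x k y) = blockMarginal μ p k x := by
  simp [blockMarginal]

lemma klIntegrand_blockMarginal_update (μ : ∀ i, Measure (X i)) (p : (∀ i, X i) → ℝ) (k : ι)
    (x : ∀ i, X i) (y : X k) :
    klIntegrand p (blockMarginal μ p k) (Function.update x k y) =
      blockMarginal μ p k x * klIntegrand (blockCondDensity μ p k x) 1 y := by
  simp only [klIntegrand, blockCondDensity, blockMarginal_update, Pi.one_apply, div_one]
  by_cases h0 : blockMarginal μ p k x = 0
  · simp [h0]
  · rw [← mul_assoc, mul_div_cancel₀ _ h0]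

variable {ν : ∀ i, Measure (X i)} {ρ : (∀ i, X i) → ℝ}

lemma blockMarginal_nonneg (hρ : 0 ≤ ρ) (k : ι) (x : ∀ i, X i) : 0 ≤ blockMarginal ν ρ k x :=
  integral_nonneg fun _ => hρ _

lemma blockCondDensity_nonneg (hρ : 0 ≤ ρ) (k : ι) (x : ∀ i, X i) (y : X k) :
    0 ≤ blockCondDensity ν ρ k x y :=
  div_nonneg (hρ _) (blockMarginal_nonneg hρ k x)

variable [Fintype ι] [∀ i, IsProbabilityMeasure (ν i)]

lemma integrable_blockMarginal (hint : Integrable ρ (Measure.pi ν)) (k : ι) :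
    Integrable (blockMarginal ν ρ k) (Measure.pi ν) :=
  ((measurePreserving_update ν k).integrable_comp_of_integrable hint).integral_prod_left

lemma integral_pi_eq_integral_update {g : (∀ i, X i) → ℝ} (hg : Integrable g (Measure.pi ν))
    (k : ι) :
    ∫ x, g x ∂Measure.pi ν = ∫ x, ∫ y, g (Function.update x k y) ∂ν k ∂Measure.pi ν := by
  have hupdate := measurePreserving_update ν k
  calc ∫ x, g x ∂Measure.pi ν
      = ∫ z : (∀ i, X i) × X k, g (Function.update z.1 k z.2) ∂(Measure.pi ν).prod (ν k) := by
        rw [← integral_map hupdate.aemeasurable (by rw [hupdate.map_eq]; exact hg.1),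
          hupdate.map_eq]
    _ = _ := integral_prod _ (hupdate.integrable_comp_of_integrable hg)

lemma integrable_klIntegrand_blockMarginal (hρ : 0 ≤ ρ) (hint : Integrable ρ (Measure.pi ν))
    {k : ι} {C : ℝ}
    (hcond_int : ∀ᵐ x ∂Measure.pi ν, Integrable (klIntegrand (blockCondDensity ν ρ k x) 1) (ν k))
    (hcond_le : ∀ᵐ x ∂Measure.pi ν, ∫ y, klIntegrand (blockCondDensity ν ρ k x) 1 y ∂ν k ≤ C) :
    Integrable (klIntegrand ρ (blockMarginal ν ρ k)) (Measure.pi ν) := by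
  have hupdate := measurePreserving_update ν k
  have hZ := integrable_blockMarginal hint k
  have hmeas : AEStronglyMeasurable (klIntegrand ρ (blockMarginal ν ρ k)) (Measure.pi ν) :=
    (hint.1.aemeasurable.mul
      (hint.1.aemeasurable.div hZ.1.aemeasurable).log).aestronglyMeasurable
  have hmeas_prod := hmeas.comp_measurePreserving hupdate
  rw [← hupdate.integrable_comp hmeas, integrable_prod_iff hmeas_prod]
  simp only [Function.comp_apply, klIntegrand_blockMarginal_update, norm_mul, Real.norm_eq_abs,
    integral_const_mul, abs_of_nonneg (blockMarginal_nonneg hρ k _)]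
  refine ⟨hcond_int.mono fun x hx => hx.const_mul _, (hZ.mul_const (C + 2)).mono' ?_ ?_⟩
  · simpa only [Function.comp_apply, klIntegrand_blockMarginal_update, norm_mul, Real.norm_eq_abs,
      integral_const_mul, abs_of_nonneg (blockMarginal_nonneg hρ k _)]
      using hmeas_prod.norm.integral_prod_right'
  filter_upwards [hcond_int, hcond_le] with x hx_int hx_le
  have habs : ∫ y, |klIntegrand (blockCondDensity ν ρ k x) 1 y| ∂ν k ≤ C + 2 :=
    calc ∫ y, |klIntegrand (blockCondDensity ν ρ k x) 1 y| ∂ν k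
        ≤ ∫ y, (klIntegrand (blockCondDensity ν ρ k x) 1 y + 2) ∂ν k :=
          integral_mono hx_int.abs (hx_int.add (integrable_const 2)) fun y =>
            abs_klIntegrand_one_le (blockCondDensity_nonneg hρ k x y)
      _ = ∫ y, klIntegrand (blockCondDensity ν ρ k x) 1 y ∂ν k + 2 := by
          rw [integral_add hx_int (integrable_const 2)]
          simp
      _ ≤ C + 2 := by gcongr
  rw [norm_mul, Real.norm_of_nonneg (blockMarginal_nonneg hρ k x),
    Real.norm_of_nonneg (integral_nonneg fun y => abs_nonneg _)]
  exact mul_le_mul_of_nonneg_left habs (blockMarginal_nonneg hρ k x)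

lemma integral_klIntegrand_blockMarginal_le (hρ : 0 ≤ ρ) (hint : Integrable ρ (Measure.pi ν))
    {k : ι} {C : ℝ} (hkl_int : Integrable (klIntegrand ρ (blockMarginal ν ρ k)) (Measure.pi ν))
    (hcond_le : ∀ᵐ x ∂Measure.pi ν, ∫ y, klIntegrand (blockCondDensity ν ρ k x) 1 y ∂ν k ≤ C) :
    ∫ x, klIntegrand ρ (blockMarginal ν ρ k) x ∂Measure.pi ν ≤ C * ∫ x, ρ x ∂Measure.pi ν := by
  have hZ := integrable_blockMarginal hint k
  have hfiber_int :=
    ((measurePreserving_update ν k).integrable_comp_of_integrable hkl_int).integral_prod_left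
  simp only [Function.comp_apply, klIntegrand_blockMarginal_update,
    integral_const_mul] at hfiber_int
  calc ∫ x, klIntegrand ρ (blockMarginal ν ρ k) x ∂Measure.pi ν
      = ∫ x, blockMarginal ν ρ k x * ∫ y, klIntegrand (blockCondDensity ν ρ k x) 1 y ∂ν k
          ∂Measure.pi ν := by
        rw [integral_pi_eq_integral_update hkl_int k]
        simp only [klIntegrand_blockMarginal_update, integral_const_mul]
    _ ≤ ∫ x, blockMarginal ν ρ k x * C ∂Measure.pi ν := by
        refine integral_mono_ae hfiber_int (hZ.mul_const C) ?_
        filter_upwards [hcond_le] with x hx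
        exact mul_le_mul_of_nonneg_left hx (blockMarginal_nonneg hρ k x)
    _ = C * ∫ x, ρ x ∂Measure.pi ν := by
        rw [integral_mul_const, mul_comm, integral_pi_eq_integral_update hint k]
        rfl

lemma toReal_lmarginal_singleton_ae_eq_blockMarginal (hρ : 0 ≤ ρ)
    (hint : Integrable ρ (Measure.pi ν)) {f : (∀ i, X i) → ENNReal}
    (hf : ∀ᵐ x ∂Measure.pi ν, f x = ENNReal.ofReal (ρ x)) (k : ι) :
    ∀ᵐ x ∂Measure.pi ν, ((∫⋯∫⁻_{k}, f ∂ν) x).toReal = blockMarginal ν ρ k x := by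
  have hmeas := (hint.1.comp_measurePreserving (measurePreserving_update ν k)).prodMk_left
  filter_upwards [ae_ae_update hf k, hmeas] with x hx hx_meas
  simp only [lmarginal_singleton]
  rw [lintegral_congr_ae hx]
  exact (integral_eq_lintegral_of_nonneg_ae (f := fun y => ρ (Function.update x k y))
    (.of_forall fun _ => hρ _) hx_meas).symm

theorem integral_klIntegrand_le_sum_blockMarginal (hρ : 0 ≤ ρ) (hint : Integrable ρ (Measure.pi ν))
    (hkl_int : ∀ k, Integrable (klIntegrand ρ (blockMarginal ν ρ k)) (Measure.pi ν)) :
    Integrable (klIntegrand ρ fun _ => ∫ x, ρ x ∂Measure.pi ν) (Measure.pi ν) ∧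
      ∫ x, klIntegrand ρ (fun _ => ∫ x, ρ x ∂Measure.pi ν) x ∂Measure.pi ν ≤
        ∑ k, ∫ x, klIntegrand ρ (blockMarginal ν ρ k) x ∂Measure.pi ν := by
  obtain ⟨f, hf, hρf⟩ : AEMeasurable (fun x => ENNReal.ofReal (ρ x)) (Measure.pi ν) :=
    hint.1.aemeasurable.ennreal_ofReal
  have hf_toReal : ∀ᵐ x ∂Measure.pi ν, (f x).toReal = ρ x := by
    filter_upwards [hρf] with x hx
    rw [← hx, ENNReal.toReal_ofReal (hρ x)]
  have hmass : ∫⁻ x, f x ∂Measure.pi ν = ENNReal.ofReal (∫ x, ρ x ∂Measure.pi ν) := by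
    rw [ofReal_integral_eq_lintegral_ofReal hint (.of_forall hρ),
      lintegral_congr_ae hρf]
  have hsingle (k : ι) :
      marginalKLIntegrand ν f {k} =ᵐ[Measure.pi ν] klIntegrand ρ (blockMarginal ν ρ k) := by
    filter_upwards [hf_toReal, toReal_lmarginal_singleton_ae_eq_blockMarginal hρ hint
      (hρf.mono fun _ => Eq.symm) k] with x hx hx_marginal
    simp only [marginalKLIntegrand, klIntegrand, hx, hx_marginal]
  have huniv : marginalKLIntegrand ν f Finset.univ =ᵐ[Measure.pi ν]
      klIntegrand ρ fun _ => ∫ x, ρ x ∂Measure.pi ν := by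
    filter_upwards [hf_toReal] with x hx
    simp only [marginalKLIntegrand, klIntegrand, hx, lmarginal_univ, hmass,
      ENNReal.toReal_ofReal (integral_nonneg hρ)]
  rw [← integrable_congr huniv, ← integral_congr_ae huniv,
    ← Finset.sum_congr rfl fun k _ => integral_congr_ae (hsingle k)]
  exact integral_marginalKLIntegrand_le_sum hf (hmass ▸ ENNReal.ofReal_ne_top) Finset.univ
    fun k _ => (integrable_congr (hsingle k)).mpr (hkl_int k)

theorem integral_klIntegrand_le_sum_of_blockCondDensity_le (hρ : 0 ≤ ρ)
    (hint : Integrable ρ (Measure.pi ν)) {C : ι → ℝ}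
    (hcond_int : ∀ k, ∀ᵐ x ∂Measure.pi ν,
      Integrable (klIntegrand (blockCondDensity ν ρ k x) 1) (ν k))
    (hcond_le : ∀ k, ∀ᵐ x ∂Measure.pi ν,
      ∫ y, klIntegrand (blockCondDensity ν ρ k x) 1 y ∂ν k ≤ C k) :
    Integrable (klIntegrand ρ fun _ => ∫ x, ρ x ∂Measure.pi ν) (Measure.pi ν) ∧
      ∫ x, klIntegrand ρ (fun _ => ∫ x, ρ x ∂Measure.pi ν) x ∂Measure.pi ν ≤
        (∑ k, C k) * ∫ x, ρ x ∂Measure.pi ν := by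
  have hkl_int (k : ι) := integrable_klIntegrand_blockMarginal hρ hint (hcond_int k) (hcond_le k)
  obtain ⟨hent_int, hent_le⟩ := integral_klIntegrand_le_sum_blockMarginal hρ hint hkl_int
  refine ⟨hent_int, hent_le.trans ?_⟩
  rw [Finset.sum_mul]
  exact Finset.sum_le_sum fun k _ =>
    integral_klIntegrand_blockMarginal_le hρ hint (hkl_int k) (hcond_le k)

end BlockConditional

section WithDensity

variable {α : Type*} [MeasurableSpace α] {μ : Measure α} {v : α → ℝ}

lemma integrable_withDensity_ofReal_iff (hv : 0 ≤ v) (hvm : AEMeasurable v μ) {g : α → ℝ} :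
    Integrable g (μ.withDensity fun x => ENNReal.ofReal (v x)) ↔
      Integrable (fun x => v x * g x) μ := by
  rw [integrable_withDensity_iff_integrable_smul₀' hvm.ennreal_ofReal
    (.of_forall fun _ => ENNReal.ofReal_lt_top)]
  simp only [ENNReal.toReal_ofReal (hv _), smul_eq_mul]

lemma integral_withDensity_ofReal (hv : 0 ≤ v) (hvm : AEMeasurable v μ) (g : α → ℝ) :
    ∫ x, g x ∂μ.withDensity (fun x => ENNReal.ofReal (v x)) = ∫ x, v x * g x ∂μ := by
  rw [integral_withDensity_eq_integral_toReal_smul₀ hvm.ennreal_ofReal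
    (.of_forall fun _ => ENNReal.ofReal_lt_top)]
  simp only [ENNReal.toReal_ofReal (hv _), smul_eq_mul]

lemma isProbabilityMeasure_withDensity_ofReal (hv : 0 ≤ v) (hint : Integrable v μ)
    (hmass : ∫ x, v x ∂μ = 1) :
    IsProbabilityMeasure (μ.withDensity fun x => ENNReal.ofReal (v x)) := by
  constructor
  rw [withDensity_apply _ MeasurableSet.univ, Measure.restrict_univ,
    ← ofReal_integral_eq_lintegral_ofReal hint (.of_forall hv), hmass,
    ENNReal.ofReal_one]

lemma integrable_klIntegrand_withDensity_iff (hv : ∀ x, 0 < v x) (hvm : AEMeasurable v μ)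
    (u : α → ℝ) :
    Integrable (klIntegrand (u / v) 1) (μ.withDensity fun x => ENNReal.ofReal (v x)) ↔
      Integrable (klIntegrand u v) μ := by
  rw [integrable_withDensity_ofReal_iff (fun x => (hv x).le) hvm,
    mul_klIntegrand_div_one fun x => (hv x).ne']

lemma integral_klIntegrand_withDensity (hv : ∀ x, 0 < v x) (hvm : AEMeasurable v μ)
    (u : α → ℝ) :
    ∫ x, klIntegrand (u / v) 1 x ∂μ.withDensity (fun x => ENNReal.ofReal (v x)) =
      ∫ x, klIntegrand u v x ∂μ := by
  rw [integral_withDensity_ofReal (fun x => (hv x).le) hvm,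
    mul_klIntegrand_div_one fun x => (hv x).ne']

end WithDensity

section ProductDensity

lemma prod_apply_update {ι : Type*} [Fintype ι] [DecidableEq ι] {X : ι → Type*}
    (q : ∀ i, X i → ℝ) (k : ι) (x : ∀ i, X i) (y : X k) :
    ∏ i, q i (Function.update x k y i) = q k y * ∏ i ∈ Finset.univ.erase k, q i (x i) := by
  rw [← Finset.mul_prod_erase _ _ (Finset.mem_univ k), Function.update_self]
  congr 1
  refine Finset.prod_congr rfl fun i hi => ?_
  rw [Function.update_of_ne (Finset.ne_of_mem_erase hi)]

variable {ι : Type*} [Fintype ι] {X : ι → Type*} [∀ i, MeasurableSpace (X i)]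
  {μ : ∀ i, Measure (X i)} {q : ∀ i, X i → ℝ}

lemma pi_withDensity_ofReal [∀ i, SigmaFinite (μ i)] (hq : ∀ i, 0 ≤ q i)
    (hint : ∀ i, Integrable (q i) (μ i)) :
    Measure.pi (fun i => (μ i).withDensity fun y => ENNReal.ofReal (q i y)) =
      (Measure.pi μ).withDensity fun x => ENNReal.ofReal (∏ i, q i (x i)) := by
  have hsigma (i : ι) : SigmaFinite ((μ i).withDensity fun y => ENNReal.ofReal (q i y)) :=
    SigmaFinite.withDensity_ofReal _
  refine Measure.pi_eq fun s hs => ?_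
  have hint_restrict (i : ι) : Integrable (q i) ((μ i).restrict (s i)) := (hint i).restrict
  rw [withDensity_apply _ (MeasurableSet.univ_pi hs), Measure.restrict_pi_pi,
    ← ofReal_integral_eq_lintegral_ofReal (Integrable.fintype_prod_dep hint_restrict)
      (.of_forall fun x => Finset.prod_nonneg fun i _ => hq i _),
    integral_fintype_prod_eq_prod,
    ENNReal.ofReal_prod_of_nonneg fun i _ => integral_nonneg (hq i)]
  refine Finset.prod_congr rfl fun i _ => ?_
  rw [withDensity_apply _ (hs i), ← ofReal_integral_eq_lintegral_ofReal (hint_restrict i)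
    (.of_forall (hq i))]

variable [DecidableEq ι]

lemma blockCondDensity_withDensity (hq : ∀ i x, 0 < q i x) {k : ι} (hqm : AEMeasurable (q k) (μ k))
    (p : (∀ i, X i) → ℝ) (x : ∀ i, X i) :
    blockCondDensity (fun i => (μ i).withDensity fun y => ENNReal.ofReal (q i y))
        (fun x => p x / ∏ i, q i (x i)) k x =
      blockCondDensity μ p k x / q k := by
  set V : ℝ := ∏ i ∈ Finset.univ.erase k, q i (x i)
  have hV : V ≠ 0 := (Finset.prod_pos fun i _ => hq i (x i)).ne'
  have hmarginal : blockMarginal (fun i => (μ i).withDensity fun y => ENNReal.ofReal (q i y))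
      (fun x => p x / ∏ i, q i (x i)) k x = blockMarginal μ p k x / V := by
    rw [blockMarginal, integral_withDensity_ofReal (fun y => (hq k y).le) hqm, blockMarginal,
      ← integral_div]
    congr 1 with y
    rw [prod_apply_update, ← div_div, mul_div_assoc', mul_div_cancel₀ _ (hq k y).ne']
  ext y
  rw [Pi.div_apply, blockCondDensity, hmarginal, prod_apply_update, ← div_div,
    div_div_div_cancel_right₀ hV, blockCondDensity, div_right_comm]

theorem mean_field_kl_bound_general (μ : ∀ i, Measure (X i)) [∀ i, SigmaFinite (μ i)]
    (p : (∀ i, X i) → ℝ) (q : ∀ i, X i → ℝ) (C : ι → ℝ)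
    (hp_nonneg : 0 ≤ p) (hp_int : Integrable p (Measure.pi μ))
    (hp_mass : ∫ x, p x ∂Measure.pi μ = 1)
    (hq_pos : ∀ k z, 0 < q k z) (hq_int : ∀ k, Integrable (q k) (μ k))
    (hq_mass : ∀ k, ∫ z, q k z ∂μ k = 1)
    (hcond_int : ∀ k, ∀ᵐ x ∂Measure.pi μ,
      Integrable (klIntegrand (blockCondDensity μ p k x) (q k)) (μ k))
    (hcond_le : ∀ k, ∀ᵐ x ∂Measure.pi μ,
      ∫ y, klIntegrand (blockCondDensity μ p k x) (q k) y ∂μ k ≤ C k) :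
    Integrable (klIntegrand p fun x => ∏ k, q k (x k)) (Measure.pi μ) ∧
      ∫ x, klIntegrand p (fun x => ∏ k, q k (x k)) x ∂Measure.pi μ ≤ ∑ k, C k := by
  let W : (∀ i, X i) → ℝ := fun x => ∏ k, q k (x k)
  let ν : ∀ i, Measure (X i) := fun i => (μ i).withDensity fun y => ENNReal.ofReal (q i y)
  have hν (i : ι) : IsProbabilityMeasure (ν i) :=
    isProbabilityMeasure_withDensity_ofReal (fun z => (hq_pos i z).le) (hq_int i) (hq_mass i)
  have hqm (k : ι) : AEMeasurable (q k) (μ k) := (hq_int k).aemeasurable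
  have hW (x : ∀ i, X i) : 0 < W x := Finset.prod_pos fun i _ => hq_pos i _
  have hW_nonneg : 0 ≤ W := fun x => (hW x).le
  have hWm : AEMeasurable W (Measure.pi μ) := (Integrable.fintype_prod_dep hq_int).aemeasurable
  have hpi : Measure.pi ν = (Measure.pi μ).withDensity fun x => ENNReal.ofReal (W x) :=
    pi_withDensity_ofReal (fun i z => (hq_pos i z).le) hq_int
  have hac : Measure.pi ν ≪ Measure.pi μ := hpi ▸ withDensity_absolutelyContinuous _ _
  have hcancel : (fun x => W x * (p / W) x) = p := funext fun x => mul_div_cancel₀ _ (hW x).ne'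
  have hρ_nonneg : 0 ≤ p / W := fun x => div_nonneg (hp_nonneg x) (hW_nonneg x)
  have hρ_int : Integrable (p / W) (Measure.pi ν) := by
    rwa [hpi, integrable_withDensity_ofReal_iff hW_nonneg hWm, hcancel]
  have hρ_mass : ∫ x, (p / W) x ∂Measure.pi ν = 1 := by
    rwa [hpi, integral_withDensity_ofReal hW_nonneg hWm, hcancel]
  have hcond (k : ι) (x : ∀ i, X i) :
      blockCondDensity ν (p / W) k x = blockCondDensity μ p k x / q k :=
    blockCondDensity_withDensity hq_pos (hqm k) p x
  have hbound := integral_klIntegrand_le_sum_of_blockCondDensity_le (C := C) hρ_nonneg hρ_int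
    (fun k => by
      filter_upwards [hac.ae_le (hcond_int k)] with x hx
      rwa [hcond, integrable_klIntegrand_withDensity_iff (hq_pos k) (hqm k)])
    (fun k => by
      filter_upwards [hac.ae_le (hcond_le k)] with x hx
      rwa [hcond, integral_klIntegrand_withDensity (hq_pos k) (hqm k)])
  rw [hρ_mass, mul_one, hpi] at hbound
  exact ⟨(integrable_klIntegrand_withDensity_iff hW hWm p).mp hbound.1,
    (integral_klIntegrand_withDensity hW hWm p).symm.trans_le hbound.2⟩

end ProductDensity

theorem mean_field_kl_bound
    (m : ℕ) (nd : Fin (m + 1) → ℕ)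
    (p : (∀ k, Fin (nd k) → ℝ) → ℝ)
    (q : ∀ k, (Fin (nd k) → ℝ) → ℝ)
    -- p is a strictly positive probability density on E = E₀ × ⋯ × E_m
    (hp_pos : ∀ x, 0 < p x) (hp_int : Integrable p) (hp_mass : ∫ x, p x = 1)
    -- each q_k is a strictly positive probability density on E_k
    (hq_pos : ∀ k z, 0 < q k z) (hq_int : ∀ k, Integrable (q k))
    (hq_mass : ∀ k, ∫ z, q k z = 1)
    -- the normalizing denominators are positive and finite everywhere
    (hZ_int : ∀ (k) (x : ∀ k, Fin (nd k) → ℝ),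
      Integrable (fun y => p (Function.update x k y)))
    (hZ_pos : ∀ (k) (x : ∀ k, Fin (nd k) → ℝ),
      0 < ∫ y, p (Function.update x k y))
    -- all KL divergences below are finite
    (hKL_int : Integrable (fun x => p x * Real.log (p x / ∏ k, q k (x k))))
    (hcondKL_int : ∀ (k) (x : ∀ k, Fin (nd k) → ℝ),
      Integrable (fun y => condDensity p k x y * Real.log (condDensity p k x y / q k y)))
    (hcondKL_bdd : ∀ k, BddAbove (Set.range fun x : ∀ k, Fin (nd k) → ℝ => condKL p q k x)) :
    -- D_KL(p ‖ ⊗_k q_k) ≤ Σ_k sup_{x_{−k}} D_KL(p(·|x_{−k}) ‖ q_k)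
    (∫ x, p x * Real.log (p x / ∏ k, q k (x k)))
      ≤ ∑ k, ⨆ x : ∀ k, Fin (nd k) → ℝ, condKL p q k x := by
  exact (mean_field_kl_bound_general (fun _ => volume) p q _ (fun x => (hp_pos x).le) hp_int hp_mass
    hq_pos hq_int hq_mass (fun k => .of_forall (hcondKL_int k))
    fun k => .of_forall fun x => le_ciSup (hcondKL_bdd k) x).2
end
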